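/- Let V be a real inner product space, let ξ ∈ V with ⟪ξ, ξ⟫ = 1, and set η(X) := ⟪X, ξ⟫. Let W be a real vector space and h : V → V → W a symmetric ℝ-bilinear map satisfying h(X, ξ) = 0 for all X ∈ V. Let R̃ : V → V → V → V be an ℝ-trilinear map with R̃(X, Y)ξ = 2(η(X) Y − η(Y) X) for all X, Y ∈ V, let P : V → V → (W →ₗ W) be an ℝ-bilinear map into linear endomorphisms of W, and let L ∈ ℝ with L ≠ 2. If for all X, Y, Z, U ∈ V: P(X,Y)(h(Z,U)) − h(R̃(X,Y)Z, U) − h(Z, R̃(X,Y)U) = L·(⟪Y,Z⟫ h(X,U) − ⟪X,Z⟫ h(Y,U) + ⟪Y,U⟫ h(X,Z) − ⟪X,U⟫ h(Y,Z)), then h = 0. -/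

import Mathlib

open RealInnerProductSpace

/-!
On `ξ` the curvature operator `R̃ (X, Y)` agrees with `2 T`, where `T` is the endomorphism
`Z ↦ g (X, Z) Y - g (Y, Z) X`, and for symmetric `h` the right-hand side `Q (g, h)` is the
derivation action of `T` on `h`. Since `h (·, ξ) = 0`, evaluating pseudo-parallelism at `(Z, ξ)`
gives `2 h (Z, T ξ) = L h (Z, T ξ)`; for `Y = ξ` the vector `T ξ` is `-X` modulo `ξ`.
-/

section

variable {K V W : Type*} [CommRing K] [AddCommGroup V] [Module K V] [AddCommGroup W] [Module K W]

/-- The derivation action `(A, B) · h` of a pair of endomorphisms on a `W`-valued bilinear map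
on `V`; the paper's `R̃ (X, Y) · h` is the case where `A` is `R̃ (X, Y)` and `B`
is the normal curvature operator. -/
def derivationAction (A : Module.End K V) (B : Module.End K W) (h : V →ₗ[K] V →ₗ[K] W) :
    V →ₗ[K] V →ₗ[K] W :=
  h.compr₂ B - h ∘ₗ A - h.compl₂ A

@[simp]
theorem derivationAction_apply (A : Module.End K V) (B : Module.End K W)
    (h : V →ₗ[K] V →ₗ[K] W) (Z U : V) :
    derivationAction A B h Z U = B (h Z U) - h (A Z) U - h Z (A U) :=
  rfl

/-- The endomorphism `Z ↦ g (X, Z) Y - g (Y, Z) X`, the curvature operator of a space of constant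
curvature `-1`. In the usual notation this is `Y ∧_g X`; the sign is chosen so that its derivation
action on a symmetric `h` is the paper's `Q (g, h)`. -/
def metricWedge (g : LinearMap.BilinForm K V) (X Y : V) : Module.End K V :=
  (g X).smulRight Y - (g Y).smulRight X

@[simp]
theorem metricWedge_apply (g : LinearMap.BilinForm K V) (X Y Z : V) :
    metricWedge g X Y Z = g X Z • Y - g Y Z • X :=
  rfl

theorem derivationAction_metricWedge_apply (g : LinearMap.BilinForm K V)
    {h : V →ₗ[K] V →ₗ[K] W} (hsymm : ∀ X Y, h X Y = h Y X) (X Y Z U : V) :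
    derivationAction (metricWedge g X Y) 0 h Z U =
      g Y Z • h X U - g X Z • h Y U + g Y U • h X Z - g X U • h Y Z := by
  simp only [derivationAction_apply, metricWedge_apply, LinearMap.zero_apply, map_sub, map_smul,
    LinearMap.sub_apply, LinearMap.smul_apply, hsymm Z]
  abel

theorem derivationAction_apply_of_apply_eq_zero (A : Module.End K V) (B : Module.End K W)
    {h : V →ₗ[K] V →ₗ[K] W} {ξ : V} (hhξ : ∀ X, h X ξ = 0) (Z : V) :
    derivationAction A B h Z ξ = -h Z (A ξ) := by
  simp [hhξ]

theorem sub_smul_apply_eq_zero_of_derivationAction_eq_smul {A T : Module.End K V}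
    {B S : Module.End K W} {h : V →ₗ[K] V →ₗ[K] W} {ξ : V} {c L : K} (hhξ : ∀ X, h X ξ = 0)
    (hA : A ξ = c • T ξ) (hact : derivationAction A B h = L • derivationAction T S h) (Z : V) :
    (L - c) • h Z (T ξ) = 0 := by
  have hZξ : c • h Z (T ξ) = L • h Z (T ξ) := by
    simpa only [LinearMap.smul_apply, derivationAction_apply_of_apply_eq_zero _ _ hhξ, hA, map_smul,
      smul_neg, neg_inj] using LinearMap.congr_fun₂ hact Z ξ
  rw [sub_smul, hZξ, sub_self]

theorem apply_metricWedge_self (g : LinearMap.BilinForm K V) {h : V →ₗ[K] V →ₗ[K] W}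
    {Z ξ : V} (hZξ : h Z ξ = 0) (X : V) :
    h Z (metricWedge g X ξ ξ) = -(g ξ ξ • h Z X) := by
  simp [hZξ]

theorem stmt_12_general [IsDomain K] [Module.IsTorsionFree K W] (g : LinearMap.BilinForm K V)
    {ξ : V} (hξ : g ξ ξ ≠ 0) {h : V →ₗ[K] V →ₗ[K] W} (hhξ : ∀ X, h X ξ = 0)
    {R : V → V → Module.End K V} {P : V → V → Module.End K W} {c L : K}
    (hRξ : ∀ X Y, R X Y ξ = c • metricWedge g X Y ξ) (hL : L ≠ c)
    (hact : ∀ X Y, derivationAction (R X Y) (P X Y) h =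
      L • derivationAction (metricWedge g X Y) 0 h) :
    h = 0 := by
  ext Z X
  have hZX : (L - c) • h Z (metricWedge g X ξ ξ) = 0 :=
    sub_smul_apply_eq_zero_of_derivationAction_eq_smul hhξ (hRξ X ξ) (hact X ξ) Z
  rw [apply_metricWedge_self g (hhξ Z), smul_neg, neg_eq_zero] at hZX
  simpa [sub_eq_zero, hL, hξ] using hZX

end

/-- Algebraic core of Theorem 4.3: a second fundamental form that is Deszcz pseudo
parallel with `L ≠ 2` with respect to the semisymmetric metric connection (whose
curvature satisfies `R̃ (X, Y) ξ = 2 (η X • Y - η Y • X)`) vanishes. -/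
theorem stmt_12 {V W : Type*} [NormedAddCommGroup V] [InnerProductSpace ℝ V]
    [AddCommGroup W] [Module ℝ W]
    (ξ : V) (hξ : ⟪ξ, ξ⟫ = 1) (η : V → ℝ) (hη : ∀ X, η X = ⟪X, ξ⟫)
    (h : V →ₗ[ℝ] V →ₗ[ℝ] W) (hsymm : ∀ X Y : V, h X Y = h Y X)
    (hhξ : ∀ X : V, h X ξ = 0)
    (Rt : V →ₗ[ℝ] V →ₗ[ℝ] V →ₗ[ℝ] V)
    (hRtξ : ∀ X Y : V, Rt X Y ξ = 2 • (η X • Y - η Y • X))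
    (P : V →ₗ[ℝ] V →ₗ[ℝ] W →ₗ[ℝ] W)
    (L : ℝ) (hL : L ≠ 2)
    (hyp : ∀ X Y Z U : V,
      P X Y (h Z U) - h (Rt X Y Z) U - h Z (Rt X Y U)
        = L • (⟪Y, Z⟫ • h X U - ⟪X, Z⟫ • h Y U + ⟪Y, U⟫ • h X Z
            - ⟪X, U⟫ • h Y Z)) :
    h = 0 := by
  refine stmt_12_general (innerₗ V) (by rw [innerₗ_apply_apply, hξ]; exact one_ne_zero) hhξ
    (R := fun X Y ↦ Rt X Y) (P := fun X Y ↦ P X Y)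
    (fun X Y ↦ by simp [hRtξ, hη, ofNat_smul_eq_nsmul]) hL fun X Y ↦ LinearMap.ext₂ fun Z U ↦ ?_
  exact (hyp X Y Z U).trans
    (congrArg (L • ·) (derivationAction_metricWedge_apply (innerₗ V) hsymm X Y Z U).symm)
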